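/- Let F be a field of characteristic zero, m ≥ 2, and n = 2q an even integer with q ≥ 1. Then there exist subsuperalgebras A and B of M_{n,m}(F)^{(+)} such that A is isomorphic as a superalgebra to osp(m, n/2), B is isomorphic as a superalgebra to M_{m−1,n}(F)^{(+)}, and M_{n,m}(F)^{(+)} = A + B (as vector spaces). -/

import Mathlib

open Matrix

namespace SJ

section SuperDefs

variable {F : Type*} [Field F] {J : Type*} [AddCommGroup J] [Module F J]

/-- A graded subspace: `A = (A ∩ J₀) ⊕ (A ∩ J₁)`. -/
def IsGradedG (ev od : Submodule F J) (A : Submodule F J) : Prop :=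
  A = (A ⊓ ev) ⊔ (A ⊓ od)

/-- A subsuperalgebra: a graded subspace closed under the product. -/
def IsSubalgG (mul : J → J → J) (ev od : Submodule F J) (A : Submodule F J) : Prop :=
  IsGradedG ev od A ∧ ∀ x ∈ A, ∀ y ∈ A, mul x y ∈ A

/-- Nontrivial: `A ∩ J₁ ≠ {0}`. -/
def NontrivG (od : Submodule F J) (A : Submodule F J) : Prop := A ⊓ od ≠ ⊥

/-- Simple: `A∘A ≠ 0` and the only graded subspaces `I ⊆ A` with `A∘I ⊆ I` are `0` and `A`. -/
def IsSimpleG (mul : J → J → J) (ev od : Submodule F J) (A : Submodule F J) : Prop :=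
  (∃ x ∈ A, ∃ y ∈ A, mul x y ≠ 0) ∧
  ∀ I : Submodule F J, I ≤ A → IsGradedG ev od I →
    (∀ x ∈ A, ∀ y ∈ I, mul x y ∈ I) → I = ⊥ ∨ I = A

/-- An isomorphism of superalgebras: an F-linear bijection mapping even part onto even
part, odd part onto odd part, and preserving the product. -/
def SuperIsoG {J₂ : Type*} [AddCommGroup J₂] [Module F J₂]
    (mul₁ : J → J → J) (ev₁ od₁ : Submodule F J)
    (mul₂ : J₂ → J₂ → J₂) (ev₂ od₂ : Submodule F J₂)
    (A : Submodule F J) (B : Submodule F J₂) : Prop :=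
  ∃ e : A ≃ₗ[F] B,
    (∀ x : A, (x : J) ∈ ev₁ ↔ (e x : J₂) ∈ ev₂) ∧
    (∀ x : A, (x : J) ∈ od₁ ↔ (e x : J₂) ∈ od₂) ∧
    ∀ x y z : A, mul₁ x y = (z : J) → mul₂ (e x) (e y) = (e z : J₂)

end SuperDefs

/-- The space of (n+m)×(n+m) matrices, indices split into even (`inl`) and odd (`inr`) ones. -/
abbrev MJ (F : Type*) [Field F] (n m : ℕ) :=
  Matrix (Fin n ⊕ Fin m) (Fin n ⊕ Fin m) F

/-- Parity of an index. -/
def pty {n m : ℕ} : Fin n ⊕ Fin m → Bool := Sum.elim (fun _ => false) (fun _ => true)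

variable (F : Type*) [Field F]

/-- The odd component of a matrix (block-antidiagonal part). -/
def oddPart {n m : ℕ} (X : MJ F n m) : MJ F n m :=
  Matrix.of fun i j => if pty i = pty j then 0 else X i j

/-- The even component of a matrix (block-diagonal part). -/
def evenPart {n m : ℕ} (X : MJ F n m) : MJ F n m :=
  Matrix.of fun i j => if pty i = pty j then X i j else 0

variable {F}

/-- The super-Jordan product on `M_{n,m}(F)^{(+)}`:  `x∘y = (xy+yx)/2` when `x` or `y` is
even and `x∘y = (xy−yx)/2` when both are odd, extended bilinearly.  (For arbitrary
matrices this bilinear extension equals `(xy+yx)/2 − y₁x₁` where `x₁, y₁` are the odd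
components.) -/
def jmul {n m : ℕ} (X Y : MJ F n m) : MJ F n m :=
  (2 : F)⁻¹ • (X * Y + Y * X) - oddPart F Y * oddPart F X

variable (F)

/-- The even part `J₀` of `M_{n,m}(F)^{(+)}`: block-diagonal matrices. -/
def evenSub (n m : ℕ) : Submodule F (MJ F n m) where
  carrier := {X | ∀ i j, pty i ≠ pty j → X i j = 0}
  zero_mem' := by intro i j _; simp
  add_mem' := by
    intro a b ha hb i j h
    simp only [Matrix.add_apply, ha i j h, hb i j h, add_zero]
  smul_mem' := by
    intro c a ha i j h
    simp only [Matrix.smul_apply, ha i j h, smul_zero]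

/-- The odd part `J₁` of `M_{n,m}(F)^{(+)}`: block-antidiagonal matrices. -/
def oddSub (n m : ℕ) : Submodule F (MJ F n m) where
  carrier := {X | ∀ i j, pty i = pty j → X i j = 0}
  zero_mem' := by intro i j _; simp
  add_mem' := by
    intro a b ha hb i j h
    simp only [Matrix.add_apply, ha i j h, hb i j h, add_zero]
  smul_mem' := by
    intro c a ha i j h
    simp only [Matrix.smul_apply, ha i j h, smul_zero]

/-- Statements about `M_{n,m}(F)^{(+)}` specialized from the generic definitions. -/
abbrev IsGraded {n m : ℕ} (A : Submodule F (MJ F n m)) : Prop :=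
  IsGradedG (evenSub F n m) (oddSub F n m) A

abbrev IsSubalg {n m : ℕ} (A : Submodule F (MJ F n m)) : Prop :=
  IsSubalgG jmul (evenSub F n m) (oddSub F n m) A

abbrev Nontriv {n m : ℕ} (A : Submodule F (MJ F n m)) : Prop :=
  NontrivG (oddSub F n m) A

abbrev IsSimple {n m : ℕ} (A : Submodule F (MJ F n m)) : Prop :=
  IsSimpleG jmul (evenSub F n m) (oddSub F n m) A

abbrev SuperIso {n₁ m₁ n₂ m₂ : ℕ}
    (A : Submodule F (MJ F n₁ m₁)) (B : Submodule F (MJ F n₂ m₂)) : Prop :=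
  SuperIsoG jmul (evenSub F n₁ m₁) (oddSub F n₁ m₁)
    jmul (evenSub F n₂ m₂) (oddSub F n₂ m₂) A B

/-- The standard symplectic matrix `S = [[0, I_q],[−I_q, 0]]` of size `2q`. -/
def SMat (q : ℕ) : Matrix (Fin (2 * q)) (Fin (2 * q)) F :=
  Matrix.of fun i j =>
    if (j : ℕ) = (i : ℕ) + q then (1 : F) else if (i : ℕ) = (j : ℕ) + q then -1 else 0

/-- `osp(p,q)`: block matrices `[[A, C],[S⁻¹Cᵀ, D]]` inside `M_{p,2q}(F)^{(+)}` with
`A` symmetric, `C` arbitrary and `Dᵀ S = S D`.  The condition on the lower-left block is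
recorded in the equivalent form `S · C₂₁ = C₁₂ᵀ`. -/
def ospSub (p q : ℕ) : Submodule F (MJ F p (2 * q)) where
  carrier := {X | (X.toBlocks₁₁)ᵀ = X.toBlocks₁₁ ∧
    SMat F q * X.toBlocks₂₁ = (X.toBlocks₁₂)ᵀ ∧
    (X.toBlocks₂₂)ᵀ * SMat F q = SMat F q * X.toBlocks₂₂}
  zero_mem' := by
    refine ⟨?_, ?_, ?_⟩ <;> ext i j <;>
      simp [Matrix.toBlocks₁₁, Matrix.toBlocks₁₂, Matrix.toBlocks₂₁, Matrix.toBlocks₂₂,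
        Matrix.mul_apply]
  add_mem' := by
    rintro a b ⟨ha1, ha2, ha3⟩ ⟨hb1, hb2, hb3⟩
    have e11 : (a + b).toBlocks₁₁ = a.toBlocks₁₁ + b.toBlocks₁₁ := rfl
    have e12 : (a + b).toBlocks₁₂ = a.toBlocks₁₂ + b.toBlocks₁₂ := rfl
    have e21 : (a + b).toBlocks₂₁ = a.toBlocks₂₁ + b.toBlocks₂₁ := rfl
    have e22 : (a + b).toBlocks₂₂ = a.toBlocks₂₂ + b.toBlocks₂₂ := rfl
    refine ⟨?_, ?_, ?_⟩
    · rw [e11, Matrix.transpose_add, ha1, hb1]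
    · rw [e21, e12, Matrix.mul_add, Matrix.transpose_add, ha2, hb2]
    · rw [e22, Matrix.transpose_add, Matrix.add_mul, Matrix.mul_add, ha3, hb3]
  smul_mem' := by
    rintro c a ⟨ha1, ha2, ha3⟩
    have e11 : (c • a).toBlocks₁₁ = c • a.toBlocks₁₁ := rfl
    have e12 : (c • a).toBlocks₁₂ = c • a.toBlocks₁₂ := rfl
    have e21 : (c • a).toBlocks₂₁ = c • a.toBlocks₂₁ := rfl
    have e22 : (c • a).toBlocks₂₂ = c • a.toBlocks₂₂ := rfl
    refine ⟨?_, ?_, ?_⟩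
    · rw [e11, Matrix.transpose_smul, ha1]
    · rw [e21, e12, Matrix.mul_smul, Matrix.transpose_smul, ha2]
    · rw [e22, Matrix.transpose_smul, Matrix.smul_mul, Matrix.mul_smul, ha3]

/-- `Q(n)`: matrices `[[A, B],[B, A]]` inside `M_{n,n}(F)^{(+)}`. -/
def QSub (n : ℕ) : Submodule F (MJ F n n) where
  carrier := {X | (∀ i j, X (Sum.inr i) (Sum.inr j) = X (Sum.inl i) (Sum.inl j)) ∧
    (∀ i j, X (Sum.inr i) (Sum.inl j) = X (Sum.inl i) (Sum.inr j))}
  zero_mem' := by constructor <;> intro i j <;> simp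
  add_mem' := by
    rintro a b ⟨ha1, ha2⟩ ⟨hb1, hb2⟩
    constructor <;> intro i j <;>
      simp only [Matrix.add_apply, ha1 i j, ha2 i j, hb1 i j, hb2 i j]
  smul_mem' := by
    rintro c a ⟨ha1, ha2⟩
    constructor <;> intro i j <;>
      simp only [Matrix.smul_apply, ha1 i j, ha2 i j]

/-- `P(n)`: matrices `[[A, B],[C, Aᵀ]]` with `B` symmetric and `C` skew-symmetric,
inside `M_{n,n}(F)^{(+)}`. -/
def PSub (n : ℕ) : Submodule F (MJ F n n) where
  carrier := {X | (∀ i j, X (Sum.inr i) (Sum.inr j) = X (Sum.inl j) (Sum.inl i)) ∧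
    (∀ i j, X (Sum.inl i) (Sum.inr j) = X (Sum.inl j) (Sum.inr i)) ∧
    (∀ i j, X (Sum.inr i) (Sum.inl j) = - X (Sum.inr j) (Sum.inl i))}
  zero_mem' := by refine ⟨?_, ?_, ?_⟩ <;> intro i j <;> simp
  add_mem' := by
    rintro a b ⟨ha1, ha2, ha3⟩ ⟨hb1, hb2, hb3⟩
    refine ⟨?_, ?_, ?_⟩ <;> intro i j <;>
      simp only [Matrix.add_apply, ha1 i j, ha2 i j, ha3 i j, hb1 i j, hb2 i j, hb3 i j] <;>
      ring
  smul_mem' := by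
    rintro c a ⟨ha1, ha2, ha3⟩
    refine ⟨?_, ?_, ?_⟩ <;> intro i j <;>
      simp only [Matrix.smul_apply, ha1 i j, ha2 i j, ha3 i j, smul_neg]

/-!
Work in `M_{m,2q}(F)^{(+)}` and exchange the two diagonal blocks at the end.

The supertranspose is an automorphism of `M_{m,2q}(F)^{(+)}`, and so is conjugation by the form
`diag(1, S)`; `osp(m, q)` is the subspace on which the two agree, hence a subsuperalgebra.

Take vectors `e`, `f` supported on the first `m` coordinates with `e ⬝ f = 1` and factor
`1 - f eᵀ = U V` with `V U = 1`. Then `X ↦ U X V` embeds `M_{m-1,2q}(F)^{(+)}`, with image the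
matrices `Z` such that `Z f = 0` and `eᵀ Z = 0`. So the two subsuperalgebras span as soon as every
matrix `Y` admits some `X ∈ osp(m, q)` with `X f = Y f` and `eᵀ X = eᵀ Y`. As `X` is
superselfadjoint, these conditions prescribe its columns `X f` and `X e`; this is possible because
`e` and `f` are linearly independent, which is where `m ≥ 2` enters.
-/

section SuperHom

variable {F}
variable {n m n' m' : ℕ}

theorem oddPart_fromBlocks (A : Matrix (Fin n) (Fin n) F) (C : Matrix (Fin n) (Fin m) F)
    (E : Matrix (Fin m) (Fin n) F) (D : Matrix (Fin m) (Fin m) F) :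
    oddPart F (fromBlocks A C E D) = fromBlocks 0 C E 0 := by
  ext (i | i) (j | j) <;> simp [oddPart, pty]

theorem oddPart_mem_oddSub (X : MJ F n m) : oddPart F X ∈ oddSub F n m := by
  intro i j hij
  simp [oddPart, hij]

theorem sub_oddPart_mem_evenSub (X : MJ F n m) : X - oddPart F X ∈ evenSub F n m := by
  intro i j hij
  simp [oddPart, hij]

theorem mem_evenSub_iff {X : MJ F n m} : X ∈ evenSub F n m ↔ oddPart F X = 0 := by
  constructor
  · intro hX
    ext i j
    simpa [oddPart] using hX i j
  · intro hX
    simpa [hX] using sub_oddPart_mem_evenSub X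

theorem mem_oddSub_iff {X : MJ F n m} : X ∈ oddSub F n m ↔ oddPart F X = X := by
  constructor
  · intro hX
    ext i j
    by_cases hij : pty i = pty j <;> simp [oddPart, hij, hX i j]
  · intro hX
    exact hX ▸ oddPart_mem_oddSub X

theorem oddPart_add (X Y : MJ F n m) : oddPart F (X + Y) = oddPart F X + oddPart F Y := by
  ext i j
  by_cases hij : pty i = pty j <;> simp [oddPart, hij]

theorem isGraded_iff_oddPart_mem {A : Submodule F (MJ F n m)} :
    IsGraded F A ↔ ∀ X ∈ A, oddPart F X ∈ A := by
  constructor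
  · intro hA X hX
    rw [hA] at hX
    obtain ⟨X₀, ⟨-, heven⟩, X₁, ⟨hX₁, hodd⟩, rfl⟩ := Submodule.mem_sup.1 hX
    rwa [oddPart_add, mem_evenSub_iff.1 heven, mem_oddSub_iff.1 hodd, zero_add]
  · intro hA
    refine le_antisymm (fun X hX => ?_) (sup_le inf_le_left inf_le_left)
    rw [← sub_add_cancel X (oddPart F X)]
    exact Submodule.add_mem_sup ⟨A.sub_mem hX (hA X hX), sub_oddPart_mem_evenSub X⟩
      ⟨hA X hX, oddPart_mem_oddSub X⟩

theorem isSubalg_top : IsSubalg F (⊤ : Submodule F (MJ F n m)) :=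
  ⟨isGraded_iff_oddPart_mem.2 fun _ _ => trivial, fun _ _ _ _ => trivial⟩

/-- Homomorphisms of superalgebras `M_{n,m}(F)^{(+)} → M_{n',m'}(F)^{(+)}`. Preservation of the
grading is expressed as compatibility with the projection onto the odd part. -/
structure IsSuperHom (f : MJ F n m →ₗ[F] MJ F n' m') : Prop where
  map_oddPart (X : MJ F n m) : f (oddPart F X) = oddPart F (f X)
  map_jmul (X Y : MJ F n m) : f (jmul X Y) = jmul (f X) (f Y)

namespace IsSuperHom

variable {f g : MJ F n m →ₗ[F] MJ F n' m'}

theorem of_map_mul (hodd : ∀ X, f (oddPart F X) = oddPart F (f X))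
    (hmul : ∀ X Y, f (X * Y) = f X * f Y) : IsSuperHom f where
  map_oddPart := hodd
  map_jmul X Y := by simp only [jmul, map_sub, map_smul, map_add, hmul, hodd]

theorem comp {n'' m'' : ℕ} {h : MJ F n' m' →ₗ[F] MJ F n'' m''} (hh : IsSuperHom h)
    (hf : IsSuperHom f) : IsSuperHom (h ∘ₗ f) where
  map_oddPart X := by simp only [LinearMap.comp_apply, hf.map_oddPart, hh.map_oddPart]
  map_jmul X Y := by simp only [LinearMap.comp_apply, hf.map_jmul, hh.map_jmul]

theorem isSubalg_map (hf : IsSuperHom f) {A : Submodule F (MJ F n m)} (hA : IsSubalg F A) :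
    IsSubalg F (A.map f) := by
  constructor
  · refine isGraded_iff_oddPart_mem.2 ?_
    rintro _ ⟨X, hX, rfl⟩
    exact ⟨oddPart F X, isGraded_iff_oddPart_mem.1 hA.1 X hX, hf.map_oddPart X⟩
  · rintro _ ⟨X, hX, rfl⟩ _ ⟨Y, hY, rfl⟩
    exact ⟨jmul X Y, hA.2 X hX Y hY, hf.map_jmul X Y⟩

theorem isSubalg_eqLocus (hf : IsSuperHom f) (hg : IsSuperHom g) :
    IsSubalg F (LinearMap.eqLocus f g) := by
  simp only [IsSubalg, IsSubalgG, isGraded_iff_oddPart_mem, LinearMap.mem_eqLocus]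
  constructor
  · intro X hX
    rw [hf.map_oddPart, hg.map_oddPart, hX]
  · intro X hX Y hY
    rw [hf.map_jmul, hg.map_jmul, hX, hY]

theorem map_mem_evenSub_iff (hf : IsSuperHom f) (hinj : Function.Injective f) {X : MJ F n m} :
    f X ∈ evenSub F n' m' ↔ X ∈ evenSub F n m := by
  rw [mem_evenSub_iff, mem_evenSub_iff, ← hf.map_oddPart, map_eq_zero_iff f hinj]

theorem map_mem_oddSub_iff (hf : IsSuperHom f) (hinj : Function.Injective f) {X : MJ F n m} :
    f X ∈ oddSub F n' m' ↔ X ∈ oddSub F n m := by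
  rw [mem_oddSub_iff, mem_oddSub_iff, ← hf.map_oddPart, hinj.eq_iff]

theorem superIso_map (hf : IsSuperHom f) (hinj : Function.Injective f)
    (A : Submodule F (MJ F n m)) : SuperIso F (A.map f) A := by
  let e := A.equivMapOfInjective f hinj
  have hfe (X : A.map f) : f (e.symm X) = X := A.map_equivMapOfInjective_symm_apply f hinj X
  refine ⟨e.symm, fun X => ?_, fun X => ?_, fun X Y Z hXY => hinj ?_⟩
  · rw [← hf.map_mem_evenSub_iff hinj, hfe]
  · rw [← hf.map_mem_oddSub_iff hinj, hfe]
  · rw [hf.map_jmul, hfe, hfe, hfe, hXY]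

end IsSuperHom

/-- The exchange of the two diagonal blocks, an isomorphism of superalgebras
`M_{n,m}(F)^{(+)} ≃ M_{m,n}(F)^{(+)}`. -/
def blockSwap : MJ F n m ≃ₗ[F] MJ F m n :=
  reindexLinearEquiv F F (Equiv.sumComm _ _) (Equiv.sumComm _ _)

theorem isSuperHom_blockSwap :
    IsSuperHom (blockSwap : MJ F n m ≃ₗ[F] MJ F m n).toLinearMap := by
  refine .of_map_mul (fun X => ?_) fun X Y => (reindexLinearEquiv_mul F F _ _ _ X Y).symm
  ext (i | i) (j | j) <;> simp [blockSwap, oddPart, pty]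

end SuperHom

section Sandwich

variable {F}
variable {ι κ : Type*} [Fintype κ] {U : Matrix ι κ F} {V : Matrix κ ι F}

/-- The linear map `X ↦ U X V` between spaces of square matrices, an embedding of associative
algebras when `V U = 1`. -/
def sandwich (U : Matrix ι κ F) (V : Matrix κ ι F) : Matrix κ κ F →ₗ[F] Matrix ι ι F :=
  mulRightLinearMap ι F V ∘ₗ mulLeftLinearMap κ F U

theorem sandwich_apply (X : Matrix κ κ F) : sandwich U V X = U * X * V := rfl

variable [Fintype ι]

theorem sandwich_mul [DecidableEq κ] (hVU : V * U = 1) (X Y : Matrix κ κ F) :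
    sandwich U V (X * Y) = sandwich U V X * sandwich U V Y :=
  calc U * (X * Y) * V = U * X * (1 * Y) * V := by simp only [Matrix.one_mul, Matrix.mul_assoc]
    _ = U * X * V * (U * Y * V) := by simp only [← hVU, Matrix.mul_assoc]

theorem sandwich_injective [DecidableEq κ] (hVU : V * U = 1) :
    Function.Injective (sandwich U V) := by
  refine Function.LeftInverse.injective (g := sandwich V U) fun X => ?_
  calc V * (U * X * V) * U = (V * U) * X * (V * U) := by simp only [Matrix.mul_assoc]
    _ = X := by rw [hVU, Matrix.one_mul, Matrix.mul_one]

theorem mem_range_sandwich [DecidableEq ι] {e f : ι → F} (hUV : U * V = 1 - vecMulVec f e)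
    {Z : Matrix ι ι F} (hZf : Z *ᵥ f = 0) (heZ : e ᵥ* Z = 0) :
    Z ∈ LinearMap.range (sandwich U V) := by
  have hUVZ : U * V * Z = Z := by
    rw [hUV, Matrix.sub_mul, Matrix.one_mul, vecMulVec_mul, heZ, vecMulVec_zero, sub_zero]
  have hZUV : Z * (U * V) = Z := by
    rw [hUV, Matrix.mul_sub, Matrix.mul_one, mul_vecMulVec, hZf, zero_vecMulVec, sub_zero]
  refine ⟨V * Z * U, ?_⟩
  calc U * (V * Z * U) * V = U * V * Z * (U * V) := by simp only [Matrix.mul_assoc]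
    _ = Z := by rw [hUVZ, hZUV]

theorem isSuperHom_sandwich_fromBlocks {n m n' m' : ℕ}
    {U₁ : Matrix (Fin n') (Fin n) F} {V₁ : Matrix (Fin n) (Fin n') F}
    {U₂ : Matrix (Fin m') (Fin m) F} {V₂ : Matrix (Fin m) (Fin m') F}
    (h₁ : V₁ * U₁ = 1) (h₂ : V₂ * U₂ = 1) :
    IsSuperHom (sandwich (fromBlocks U₁ 0 0 U₂) (fromBlocks V₁ 0 0 V₂)) := by
  refine .of_map_mul (fun X => ?_) (sandwich_mul ?_)
  · rw [← fromBlocks_toBlocks X]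
    simp [sandwich_apply, oddPart_fromBlocks, fromBlocks_multiply]
  · simp [fromBlocks_multiply, h₁, h₂]

end Sandwich

section SuperTranspose

variable {F}
variable {n m : ℕ}

theorem jmul_fromBlocks [NeZero (2 : F)] (A A' : Matrix (Fin n) (Fin n) F)
    (C C' : Matrix (Fin n) (Fin m) F) (E E' : Matrix (Fin m) (Fin n) F)
    (D D' : Matrix (Fin m) (Fin m) F) :
    jmul (fromBlocks A C E D) (fromBlocks A' C' E' D') =
      (2 : F)⁻¹ • fromBlocks (A * A' + A' * A + (C * E' - C' * E))
        (A * C' + C' * D + (A' * C + C * D'))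
        (D * E' + E' * A + (D' * E + E * A'))
        (D * D' + D' * D + (E * C' - E' * C)) := by
  have two_smul_jmul (X Y : MJ F n m) :
      (2 : F) • jmul X Y = X * Y + Y * X - (2 : F) • (oddPart F Y * oddPart F X) := by
    rw [jmul, smul_sub, smul_inv_smul₀ two_ne_zero]
  rw [eq_inv_smul_iff₀ two_ne_zero, two_smul_jmul]
  simp only [oddPart_fromBlocks, fromBlocks_multiply, fromBlocks_add, fromBlocks_neg,
    sub_eq_add_neg, two_smul, fromBlocks_inj, Matrix.zero_mul, Matrix.mul_zero]
  refine ⟨?_, ?_, ?_, ?_⟩ <;> abel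

/-- The supertranspose `[[A, C], [E, D]] ↦ [[Aᵀ, -Eᵀ], [Cᵀ, Dᵀ]]`, for which
`(XY)ˢᵗ = (-1)^{|X||Y|} Yˢᵗ Xˢᵗ` on homogeneous matrices. -/
def superTranspose : MJ F n m →ₗ[F] MJ F n m where
  toFun X := fromBlocks X.toBlocks₁₁ᵀ (-X.toBlocks₂₁ᵀ) X.toBlocks₁₂ᵀ X.toBlocks₂₂ᵀ
  map_add' X Y := by
    ext (i | i) (j | j) <;>
      simp [toBlocks₁₁, toBlocks₁₂, toBlocks₂₁, toBlocks₂₂, add_comm]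
  map_smul' c X := by
    ext (i | i) (j | j) <;> simp [toBlocks₁₁, toBlocks₁₂, toBlocks₂₁, toBlocks₂₂]

theorem superTranspose_fromBlocks (A : Matrix (Fin n) (Fin n) F) (C : Matrix (Fin n) (Fin m) F)
    (E : Matrix (Fin m) (Fin n) F) (D : Matrix (Fin m) (Fin m) F) :
    superTranspose (fromBlocks A C E D) = fromBlocks Aᵀ (-Eᵀ) Cᵀ Dᵀ := rfl

theorem isSuperHom_superTranspose [NeZero (2 : F)] :
    IsSuperHom (superTranspose : MJ F n m →ₗ[F] MJ F n m) where
  map_oddPart X := by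
    rw [← fromBlocks_toBlocks X]
    simp [superTranspose_fromBlocks, oddPart_fromBlocks]
  map_jmul X Y := by
    rw [← fromBlocks_toBlocks X, ← fromBlocks_toBlocks Y]
    simp only [jmul_fromBlocks, superTranspose_fromBlocks, map_smul, transpose_add, transpose_sub,
      transpose_mul, Matrix.neg_mul, Matrix.mul_neg]
    congr 2 <;> abel

end SuperTranspose

section Interpolation

variable {R ι κ : Type*} [CommRing R]

theorem exists_mul_eq_one_sub_vecMulVec_single {k : ℕ} {e : Fin (k + 1) → R} (he : e 0 = 1) :
    ∃ (P : Matrix (Fin (k + 1)) (Fin k) R) (Q : Matrix (Fin k) (Fin (k + 1)) R),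
      Q * P = 1 ∧ P * Q = 1 - vecMulVec (Pi.single 0 1) e := by
  refine ⟨(1 - vecMulVec (Pi.single 0 1) e).submatrix id Fin.succ,
    submatrix 1 Fin.succ id, ?_, ?_⟩
  · ext i j
    simp [mul_apply, one_apply, vecMulVec_apply]
  · ext i j
    refine Fin.cases ?_ (fun j => ?_) j
    · simp [mul_apply, one_apply, vecMulVec_apply, he, Pi.single_apply]
    · simp [mul_apply, one_apply, vecMulVec_apply]

theorem fromBlocks_mul_fromBlocks_eq_one_sub_vecMulVec {μ : Type*} [Fintype κ] [Fintype μ]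
    [DecidableEq ι] [DecidableEq μ] {P : Matrix ι κ R} {Q : Matrix κ ι R} {e f : ι → R}
    (hPQ : P * Q = 1 - vecMulVec f e) :
    fromBlocks P 0 0 (1 : Matrix μ μ R) * fromBlocks Q 0 0 (1 : Matrix μ μ R) =
      1 - vecMulVec (Sum.elim f 0) (Sum.elim e 0) := by
  rw [fromBlocks_multiply, hPQ]
  ext (i | i) (j | j) <;> simp [vecMulVec_apply, Matrix.one_apply]

variable [Fintype ι] {x y x' y' : ι → R}

theorem exists_mulVec_eq (hxx : x' ⬝ᵥ x = 1) (hxy : x' ⬝ᵥ y = 0) (hyx : y' ⬝ᵥ x = 0)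
    (hyy : y' ⬝ᵥ y = 1) (u v : κ → R) :
    ∃ E : Matrix κ ι R, E *ᵥ x = u ∧ E *ᵥ y = v :=
  ⟨vecMulVec u x' + vecMulVec v y', by simp [add_mulVec, vecMulVec_mulVec, hxx, hyx],
    by simp [add_mulVec, vecMulVec_mulVec, hxy, hyy]⟩

theorem exists_isSymm_mulVec_eq (hxx : x' ⬝ᵥ x = 1) (hxy : x' ⬝ᵥ y = 0) (hyx : y' ⬝ᵥ x = 0)
    (hyy : y' ⬝ᵥ y = 1) {u v : ι → R} (huv : u ⬝ᵥ y = v ⬝ᵥ x) :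
    ∃ A : Matrix ι ι R, A.IsSymm ∧ A *ᵥ x = u ∧ A *ᵥ y = v := by
  -- Symmetrizing the solution `u x'ᵀ + v y'ᵀ` changes its values at `x` and `y` by combinations of
  -- `x'` and `y'`, which the last three terms remove.
  refine ⟨vecMulVec u x' + vecMulVec x' u + (vecMulVec v y' + vecMulVec y' v)
    - (u ⬝ᵥ x) • vecMulVec x' x' - (v ⬝ᵥ y) • vecMulVec y' y'
    - (u ⬝ᵥ y) • (vecMulVec x' y' + vecMulVec y' x'), ?_, ?_, ?_⟩
  · simp only [IsSymm, transpose_add, transpose_sub, transpose_smul, transpose_vecMulVec,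
      smul_add]
    abel
  · ext i
    simp only [huv, smul_add, sub_mulVec, add_mulVec, smul_mulVec, vecMulVec_mulVec, hxx, hyx,
      op_smul_eq_smul, one_smul, zero_smul, smul_zero, Pi.sub_apply, Pi.add_apply, Pi.smul_apply,
      Pi.zero_apply, smul_eq_mul]
    ring
  · ext i
    simp only [smul_add, sub_mulVec, add_mulVec, smul_mulVec, vecMulVec_mulVec, hxy, hyy,
      op_smul_eq_smul, one_smul, zero_smul, smul_zero, Pi.sub_apply, Pi.add_apply, Pi.smul_apply,
      Pi.zero_apply, smul_eq_mul]
    ring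

end Interpolation

section Orthosymplectic

variable {p q : ℕ}

theorem exists_SMat_eq_submatrix_J (q : ℕ) :
    ∃ e : Fin (2 * q) ≃ Fin q ⊕ Fin q, SMat F q = (-J (Fin q) F).submatrix e e := by
  let e : Fin q ⊕ Fin q ≃ Fin (2 * q) := finSumFinEquiv.trans (finCongr (two_mul q).symm)
  have hJ : (SMat F q).submatrix e e = -J (Fin q) F := by
    ext (i | i) (j | j) <;>
      simp only [e, SMat, J, Equiv.coe_trans, submatrix_apply, Function.comp_apply,
        finSumFinEquiv_apply_left, finSumFinEquiv_apply_right, Fin.natAdd_eq_addNat, finCongr_apply,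
        of_apply, Fin.val_cast, Fin.val_castAdd, Fin.val_addNat, Matrix.neg_apply,
        fromBlocks_apply₁₁, fromBlocks_apply₁₂, fromBlocks_apply₂₁, fromBlocks_apply₂₂, one_apply,
        Matrix.zero_apply, Fin.ext_iff] <;> grind
  exact ⟨e.symm, by simp [← hJ]⟩

theorem transpose_SMat (q : ℕ) : (SMat F q)ᵀ = -SMat F q := by
  obtain ⟨e, he⟩ := exists_SMat_eq_submatrix_J F q
  rw [he, transpose_submatrix, transpose_neg, J_transpose, submatrix_neg]
  rfl

theorem SMat_mul_SMat (q : ℕ) : SMat F q * SMat F q = -1 := by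
  obtain ⟨e, he⟩ := exists_SMat_eq_submatrix_J F q
  rw [he, submatrix_mul_equiv, neg_mul_neg, J_squared]
  ext i j
  simp [one_apply]

variable {F}

theorem fromBlocks_mem_ospSub_iff (A : Matrix (Fin p) (Fin p) F)
    (C : Matrix (Fin p) (Fin (2 * q)) F) (E : Matrix (Fin (2 * q)) (Fin p) F)
    (D : Matrix (Fin (2 * q)) (Fin (2 * q)) F) :
    fromBlocks A C E D ∈ ospSub F p q ↔
      Aᵀ = A ∧ SMat F q * E = Cᵀ ∧ Dᵀ * SMat F q = SMat F q * D := Iff.rfl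

theorem ospSub_eq_eqLocus :
    ospSub F p q = LinearMap.eqLocus superTranspose
      (sandwich (fromBlocks 1 0 0 (SMat F q)) (fromBlocks 1 0 0 (-SMat F q))) := by
  ext X
  rw [← fromBlocks_toBlocks X]
  generalize X.toBlocks₁₁ = A, X.toBlocks₁₂ = C, X.toBlocks₂₁ = E, X.toBlocks₂₂ = D
  have hS := transpose_SMat F q
  have hSS := SMat_mul_SMat F q
  rw [fromBlocks_mem_ospSub_iff, LinearMap.mem_eqLocus, superTranspose_fromBlocks, sandwich_apply]
  simp only [fromBlocks_multiply, fromBlocks_inj]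
  generalize SMat F q = S at *
  constructor
  · rintro ⟨hA, hE, hD⟩
    have hE' : -Eᵀ = C * -S := by
      rw [← transpose_transpose C, ← hE, transpose_mul, hS, Matrix.mul_neg, Matrix.mul_neg,
        Matrix.neg_mul, neg_neg, Matrix.mul_assoc, hSS, Matrix.mul_neg, Matrix.mul_one]
    have hD' : Dᵀ = S * D * -S := by
      rw [← hD, Matrix.mul_neg, Matrix.mul_assoc, hSS, Matrix.mul_neg, Matrix.mul_one, neg_neg]
    simp [hA, hE, hE', ← hD']
  · rintro ⟨hA, -, hE, hD⟩
    simp only [Matrix.mul_zero, Matrix.mul_one, Matrix.one_mul, Matrix.zero_mul, add_zero,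
      zero_add] at hA hE hD
    refine ⟨hA, hE.symm, ?_⟩
    rw [hD, Matrix.mul_neg, Matrix.neg_mul, Matrix.mul_assoc, hSS, Matrix.mul_neg, Matrix.mul_one,
      neg_neg]

theorem isSubalg_ospSub [NeZero (2 : F)] : IsSubalg F (ospSub F p q) := by
  rw [ospSub_eq_eqLocus]
  refine isSuperHom_superTranspose.isSubalg_eqLocus
    (isSuperHom_sandwich_fromBlocks (Matrix.one_mul 1) ?_)
  rw [Matrix.neg_mul, SMat_mul_SMat, neg_neg]

theorem exists_mem_ospSub_mulVec_eq_vecMul_eq {e f e' f' : Fin p → F} (hff : f' ⬝ᵥ f = 1)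
    (hfe : f' ⬝ᵥ e = 0) (hef : e' ⬝ᵥ f = 0) (hee : e' ⬝ᵥ e = 1) (Y : MJ F p (2 * q)) :
    ∃ X ∈ ospSub F p q, X *ᵥ Sum.elim f 0 = Y *ᵥ Sum.elim f 0 ∧
      Sum.elim e 0 ᵥ* X = Sum.elim e 0 ᵥ* Y := by
  obtain ⟨A, hA, hAf, hAe⟩ := exists_isSymm_mulVec_eq hff hfe hef hee
    (u := Y.toBlocks₁₁ *ᵥ f) (v := e ᵥ* Y.toBlocks₁₁)
    (by rw [dotProduct_comm, dotProduct_mulVec])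
  obtain ⟨E, hEf, hEe⟩ := exists_mulVec_eq hff hfe hef hee
    (Y.toBlocks₂₁ *ᵥ f) (-(SMat F q *ᵥ (e ᵥ* Y.toBlocks₁₂)))
  have heC : e ᵥ* (SMat F q * E)ᵀ = e ᵥ* Y.toBlocks₁₂ := by
    rw [vecMul_transpose, ← mulVec_mulVec, hEe, mulVec_neg, mulVec_mulVec, SMat_mul_SMat,
      neg_mulVec, one_mulVec, neg_neg]
  have heA : e ᵥ* A = e ᵥ* Y.toBlocks₁₁ := by rw [← hA.eq, vecMul_transpose, hAe]
  refine ⟨fromBlocks A (SMat F q * E)ᵀ E 0, ?_, ?_, ?_⟩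
  · simp [fromBlocks_mem_ospSub_iff, hA.eq]
  · rw [← fromBlocks_toBlocks Y]
    simp [fromBlocks_mulVec, hAf, hEf]
  · rw [← fromBlocks_toBlocks Y]
    simp only [vecMul_fromBlocks, Sum.elim_comp_inl, Sum.elim_comp_inr, zero_vecMul, add_zero, heA,
      heC]

theorem exists_isSuperHom_ospSub_sup_map_eq_top (k q : ℕ) :
    ∃ φ : MJ F (k + 1) (2 * q) →ₗ[F] MJ F (k + 2) (2 * q),
      IsSuperHom φ ∧ Function.Injective φ ∧ ospSub F (k + 2) q ⊔ Submodule.map φ ⊤ = ⊤ := by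
  let f : Fin (k + 2) → F := Pi.single 0 1
  let e : Fin (k + 2) → F := Pi.single 0 1 + Pi.single 1 1
  obtain ⟨P, Q, hQP, hPQ⟩ := exists_mul_eq_one_sub_vecMulVec_single (e := e) (by simp [e])
  let U : Matrix (Fin (k + 2) ⊕ Fin (2 * q)) (Fin (k + 1) ⊕ Fin (2 * q)) F := fromBlocks P 0 0 1
  let V : Matrix (Fin (k + 1) ⊕ Fin (2 * q)) (Fin (k + 2) ⊕ Fin (2 * q)) F := fromBlocks Q 0 0 1
  have hVU : V * U = 1 := by simp [U, V, fromBlocks_multiply, hQP]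
  have hUV : U * V = 1 - vecMulVec (Sum.elim f 0) (Sum.elim e 0) :=
    fromBlocks_mul_fromBlocks_eq_one_sub_vecMulVec hPQ
  refine ⟨sandwich U V, isSuperHom_sandwich_fromBlocks hQP (Matrix.one_mul 1),
    sandwich_injective hVU, eq_top_iff.2 fun Y _ => ?_⟩
  obtain ⟨X, hX, hXf, heX⟩ := exists_mem_ospSub_mulVec_eq_vecMul_eq (e := e) (f := f)
    (e' := Pi.single 1 1) (f' := Pi.single 0 1 - Pi.single 1 1)
    (by simp [f]) (by simp [e]) (by simp [f]) (by simp [e]) Y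
  rw [← add_sub_cancel X Y, ← LinearMap.range_eq_map]
  refine Submodule.add_mem_sup hX (mem_range_sandwich hUV ?_ ?_)
  · rw [sub_mulVec, hXf, sub_self]
  · rw [vecMul_sub, heX, sub_self]

end Orthosymplectic

theorem osp_plus_Mm1n_decomposition_general
    (F : Type*) [Field F] [NeZero (2 : F)] (m q : ℕ) (hm : 2 ≤ m) :
    ∃ A B : Submodule F (MJ F (2 * q) m),
      IsSubalg F A ∧ IsSubalg F B ∧
      SuperIso F A (ospSub F m q) ∧
      SuperIso F B (⊤ : Submodule F (MJ F (m - 1) (2 * q))) ∧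
      A ⊔ B = ⊤ := by
  obtain ⟨k, rfl⟩ := Nat.exists_eq_add_of_le' hm
  obtain ⟨φ, hφ, hφinj, hsup⟩ := exists_isSuperHom_ospSub_sup_map_eq_top (F := F) k q
  have hswap := isSuperHom_blockSwap (F := F) (n := k + 2) (m := 2 * q)
  have hswapφ := hswap.comp hφ
  refine ⟨(ospSub F (k + 2) q).map blockSwap.toLinearMap,
    Submodule.map (blockSwap.toLinearMap ∘ₗ φ) ⊤,
    hswap.isSubalg_map isSubalg_ospSub, hswapφ.isSubalg_map isSubalg_top,
    hswap.superIso_map blockSwap.injective _,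
    hswapφ.superIso_map (blockSwap.injective.comp hφinj) _, ?_⟩
  rw [Submodule.map_comp, ← Submodule.map_sup, hsup, Submodule.map_top, LinearEquiv.range]

/-- for `m ≥ 2` and even `n = 2q`, there exist subsuperalgebras `A, B` of
`M_{n,m}(F)^{(+)}` with `A ≅ osp(m, n/2)`, `B ≅ M_{m−1,n}(F)^{(+)}` and
`M_{n,m}(F)^{(+)} = A + B`. -/
theorem osp_plus_Mm1n_decomposition
    (F : Type*) [Field F] [CharZero F]
    (m q : ℕ) (hm : 2 ≤ m) (hq : 1 ≤ q) :
    ∃ A B : Submodule F (MJ F (2 * q) m),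
      IsSubalg F A ∧ IsSubalg F B ∧
      SuperIso F A (ospSub F m q) ∧
      SuperIso F B (⊤ : Submodule F (MJ F (m - 1) (2 * q))) ∧
      A ⊔ B = ⊤ := by
  exact osp_plus_Mm1n_decomposition_general F m q hm

end SJ
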